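/- Let p ≥ 1, α, β : Fin (p+1) → ℕ, and let a_k ∈ ℕ be defined by the power series expansion ∑_{k≥0} a_k x^k = ∏_{i=0}^{p}(α_i + β_i x)/(1 − x)^p (valid for |x| < 1). Let l be a positive integer and q ∈ ℂ with 0 < |q| < 1. Then the family (n, k) ↦ a_k · q^{l(n² + (2n+1)k)} over ℕ × ℕ is summable and ∑_{(n,k)∈ℕ×ℕ} a_k · q^{l(n² + (2n+1)k)} = ∑_{n≥0} q^{l n²} · ∏_{i=0}^{p} (α_i + β_i q^{l(2n+1)}) / (1 − q^{l(2n+1)})^p. -/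

import Mathlib

open Finset

theorem trace_general_tensor_product (p : ℕ) (hp : 1 ≤ p)
    (α β : Fin (p + 1) → ℕ) (a : ℕ → ℕ)
    (ha : ∀ x : ℂ, ‖x‖ < 1 →
      Summable (fun k : ℕ => (a k : ℂ) * x ^ k) ∧
      (∑' k : ℕ, (a k : ℂ) * x ^ k) =
        (∏ i : Fin (p + 1), ((α i : ℂ) + (β i : ℂ) * x)) / (1 - x) ^ p)
    (l : ℕ) (hl : 0 < l) (q : ℂ)
    (hq0 : 0 < ‖q‖) (hq1 : ‖q‖ < 1) :
    Summable (fun pr : ℕ × ℕ =>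
      (a pr.2 : ℂ) * q ^ (l * (pr.1 ^ 2 + (2 * pr.1 + 1) * pr.2))) ∧
    (∑' pr : ℕ × ℕ, (a pr.2 : ℂ) * q ^ (l * (pr.1 ^ 2 + (2 * pr.1 + 1) * pr.2))) =
      ∑' n : ℕ, q ^ (l * n ^ 2) *
        (∏ i : Fin (p + 1), ((α i : ℂ) + (β i : ℂ) * q ^ (l * (2 * n + 1)))) /
          (1 - q ^ (l * (2 * n + 1))) ^ p := by
  have hS : Summable (fun pr : ℕ × ℕ =>
      (a pr.2 : ℂ) * q ^ (l * (pr.1 ^ 2 + (2 * pr.1 + 1) * pr.2))) := by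
    have h1 : Summable (fun n : ℕ => ‖q‖ ^ n) :=
      summable_geometric_of_lt_one hq0.le hq1
    have h2 : Summable (fun k : ℕ => (a k : ℝ) * ‖q‖ ^ k) := by
      have h := (ha q hq1).1.norm
      simpa using h
    have h3 := h1.mul_of_nonneg h2 (fun n => by positivity) (fun k => by positivity)
    refine Summable.of_norm_bounded h3 ?_
    rintro ⟨n, k⟩
    have hexp : n + k ≤ l * (n ^ 2 + (2 * n + 1) * k) := by
      have h4 : n + k ≤ n ^ 2 + (2 * n + 1) * k := by
        have : n ≤ n ^ 2 := Nat.le_self_pow two_ne_zero n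
        nlinarith [Nat.zero_le (n * k)]
      exact h4.trans (Nat.le_mul_of_pos_left _ hl)
    have h5 : ‖q‖ ^ (l * (n ^ 2 + (2 * n + 1) * k)) ≤ ‖q‖ ^ (n + k) :=
      pow_le_pow_of_le_one hq0.le hq1.le hexp
    simp only [norm_mul, norm_pow, Complex.norm_natCast]
    calc (a k : ℝ) * ‖q‖ ^ (l * (n ^ 2 + (2 * n + 1) * k))
        ≤ (a k : ℝ) * ‖q‖ ^ (n + k) := by gcongr
      _ = ‖q‖ ^ n * ((a k : ℝ) * ‖q‖ ^ k) := by ring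
  refine ⟨hS, ?_⟩
  rw [hS.tsum_prod]
  refine tsum_congr fun n => ?_
  have hx : ‖q ^ (l * (2 * n + 1))‖ < 1 := by
    rw [norm_pow]
    exact pow_lt_one₀ hq0.le hq1 (by positivity)
  rw [mul_div_assoc, ← (ha _ hx).2, ← tsum_mul_left]
  refine tsum_congr fun k => ?_
  rw [← pow_mul, mul_add, pow_add, mul_assoc l]
  ring
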